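/- Let K be a field of characteristic ≠ 2 and A, B, D ∈ K with D ≠ 0. Then S^{(D;A,B)} has at most finitely many singular points: the set of points (t0:…:t4) ∈ P^4(K̄), over an algebraic closure K̄ of K, that lie on S^{(D;A,B)} and are singular, is finite. -/

import Mathlib

open IsDedekindDomain NumberField

/-- The affine equations defining the surface `S^{(D;A,B)}`:
`t0·t1 = t2² − D·t3²` and `(t0 + A·t1)(t0 + B·t1) = t2² − D·t4²`. -/
def SPoint {F : Type*} [Field F] (A B D : F) (t : Fin 5 → F) : Prop :=
  t 0 * t 1 = t 2 ^ 2 - D * t 3 ^ 2 ∧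
  (t 0 + A * t 1) * (t 0 + B * t 1) = t 2 ^ 2 - D * t 4 ^ 2

/-- `S^{(D;A,B)}(F) ≠ ∅`: there is a nonzero solution of the two equations over `F`. -/
def HasPoint (F : Type*) [Field F] (A B D : F) : Prop :=
  ∃ t : Fin 5 → F, t ≠ 0 ∧ SPoint A B D t


/-- The Jacobian matrix of the two defining equations at a point `t`. -/
noncomputable def jacobian {F : Type*} [Field F] (A B D : F) (t : Fin 5 → F) :
    Matrix (Fin 2) (Fin 5) F :=
  !![t 1, t 0, -2 * t 2, 2 * D * t 3, 0;
     2 * t 0 + (A + B) * t 1, (A + B) * t 0 + 2 * A * B * t 1, -2 * t 2, 0, 2 * D * t 4]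

/-!
Let `Q₁`, `Q₂` be the quadratic forms defining `S^{(D;A,B)}`. The gradient of `Q₁` does not vanish
on the surface, so at a singular point the gradient of `Q₂` is `c` times that of `Q₁`: the point is
a vertex of the member `Q₂ - c • Q₁` of the pencil. Since `Q₂ - c • Q₁` has the terms
`(c - 1) * t₂²`, `-c * D * t₃²` and `D * t₄²`, a vertex has `t₄ = 0`, and also `t₂ = 0` unless
`c = 1` and `t₃ = 0` unless `c = 0`. Normalising `t₁ = 1`, each of the cases `c = 0`, `c = 1` and
`c ≠ 0, 1` then leaves at most two points.
-/

theorem finite_setOf_pow_eq {R : Type*} [CommRing R] [IsDomain R] {n : ℕ} (hn : 0 < n) (a : R) :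
    {x : R | x ^ n = a}.Finite := by
  classical
  exact (Polynomial.nthRoots n a).toFinset.finite_toSet.subset fun x hx =>
    Multiset.mem_toFinset.mpr ((Polynomial.mem_nthRoots hn).mpr hx)

theorem finite_setOf_projectivization_mk_mem {K V : Type*} [DivisionRing K] [AddCommGroup V]
    [Module K V] {s : Set V} (hs : s.Finite) :
    {p : Projectivization K V | ∃ v ∈ s, ∃ hv : v ≠ 0, p = Projectivization.mk K v hv}.Finite := by
  refine ((hs.preimage Subtype.val_injective.injOn).image (Projectivization.mk' K)).subset ?_
  rintro _ ⟨v, hvs, hv, rfl⟩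
  exact ⟨⟨v, hv⟩, hvs, rfl⟩

theorem exists_smul_row_eq_row_of_rank_le_one {m n F : Type*} [Fintype n] [Field F]
    {M : Matrix m n F} (hM : M.rank ≤ 1) {i : m} (hi : M i ≠ 0) (j : m) :
    ∃ c : F, c • M i = M j := by
  by_contra! h
  have independent : LinearIndependent F (M.submatrix ![i, j] id).row := by
    convert! (LinearIndependent.pair_iff' hi).mpr h using 1
    ext k l
    fin_cases k <;> rfl
  have rank_eq_two : (M.submatrix ![i, j] id).rank = 2 := by
    simpa only [Fintype.card_fin] using independent.rank_matrix
  have := M.rank_submatrix_le ![i, j] id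
  lia

section Surface

variable {F : Type*} [Field F] {A B D c : F} {t : Fin 5 → F}

theorem SPoint.smul (h : SPoint A B D t) (a : F) : SPoint A B D (a • t) := by
  obtain ⟨h₁, h₂⟩ := h
  simp only [SPoint, Pi.smul_apply, smul_eq_mul]
  constructor
  · linear_combination a ^ 2 * h₁
  · linear_combination a ^ 2 * h₂

theorem jacobian_smul (A B D a : F) (t : Fin 5 → F) :
    jacobian A B D (a • t) = a • jacobian A B D t := by
  ext i j
  fin_cases i <;> fin_cases j <;> simp [jacobian] <;> ring

theorem SPoint.jacobian_zero_ne_zero (h2 : (2 : F) ≠ 0) (hD : D ≠ 0) (h : SPoint A B D t)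
    (ht : t ≠ 0) : jacobian A B D t 0 ≠ 0 := by
  intro hrow
  have t₁ : t 1 = 0 := congrFun hrow 0
  have t₀ : t 0 = 0 := congrFun hrow 1
  have t₂ : t 2 = 0 := by simpa [jacobian, h2] using congrFun hrow 2
  have t₃ : t 3 = 0 := by simpa [jacobian, h2, hD] using congrFun hrow 3
  have t₄ : t 4 = 0 := by simpa [t₀, t₁, t₂, hD] using h.2
  apply ht
  ext i
  fin_cases i <;> assumption

/-- `t` lies on `S^{(D;A,B)}`, cut out by `Q₁` and `Q₂`, and the gradient of `Q₂ - c • Q₁` vanishes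
at `t`, i.e. `t` is a vertex of that member of the pencil of quadrics spanned by `Q₁` and `Q₂`.
The member `Q₁` itself is left out, as none of its vertices lies on the surface when `2 * D ≠ 0`. -/
structure IsPencilVertex (A B D c : F) (t : Fin 5 → F) : Prop where
  sPoint : SPoint A B D t
  smul_jacobian_zero : c • jacobian A B D t 0 = jacobian A B D t 1

theorem SPoint.exists_isPencilVertex (h2 : (2 : F) ≠ 0) (hD : D ≠ 0) (h : SPoint A B D t)
    (ht : t ≠ 0) (hrank : (jacobian A B D t).rank ≤ 1) : ∃ c, IsPencilVertex A B D c t :=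
  (exists_smul_row_eq_row_of_rank_le_one hrank (h.jacobian_zero_ne_zero h2 hD ht) 1).imp
    fun _ hc => ⟨h, hc⟩

/-- The vectors with `t₁ = 1` that can represent singular points of `S^{(D;A,B)}`. The three pieces
are the vertices of `Q₂ - c • Q₁` for `c ≠ 0, 1`, for `c = 0` and for `c = 1`. -/
def singularCandidates (A B D : F) : Set (Fin 5 → F) :=
  {![0, 1, 0, 0, 0]} ∪
    (fun z => ![-(A + B) / 2, 1, 0, z, 0]) '' {z | z ^ 2 = (A + B) / 2 / D} ∪
    (fun y => ![(1 - (A + B)) / 2, 1, y, 0, 0]) '' {y | y ^ 2 = (1 - (A + B)) / 2}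

theorem finite_singularCandidates (A B D : F) : (singularCandidates A B D).Finite :=
  ((Set.finite_singleton _).union ((finite_setOf_pow_eq two_pos _).image _)).union
    ((finite_setOf_pow_eq two_pos _).image _)

namespace IsPencilVertex

theorem smul (h : IsPencilVertex A B D c t) (a : F) : IsPencilVertex A B D c (a • t) where
  sPoint := h.sPoint.smul a
  smul_jacobian_zero := by
    rw [jacobian_smul]
    change c • a • jacobian A B D t 0 = a • jacobian A B D t 1
    rw [smul_comm, h.smul_jacobian_zero]

theorem mul_apply_one (h : IsPencilVertex A B D c t) : c * t 1 = 2 * t 0 + (A + B) * t 1 :=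
  congrFun h.smul_jacobian_zero 0

theorem apply_two_eq_zero (h : IsPencilVertex A B D c t) (h2 : (2 : F) ≠ 0) (hc : c ≠ 1) :
    t 2 = 0 := by
  have hcol : c * (-2 * t 2) = -2 * t 2 := congrFun h.smul_jacobian_zero 2
  have : 2 * (c - 1) * t 2 = 0 := by linear_combination -hcol
  simpa [h2, sub_ne_zero.mpr hc] using this

theorem apply_three_eq_zero (h : IsPencilVertex A B D c t) (h2 : (2 : F) ≠ 0) (hD : D ≠ 0)
    (hc : c ≠ 0) : t 3 = 0 := by
  have hcol : c * (2 * D * t 3) = 0 := congrFun h.smul_jacobian_zero 3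
  simpa [h2, hD, hc] using hcol

theorem apply_four_eq_zero (h : IsPencilVertex A B D c t) (h2 : (2 : F) ≠ 0) (hD : D ≠ 0) :
    t 4 = 0 := by
  have hcol : c * 0 = 2 * D * t 4 := congrFun h.smul_jacobian_zero 4
  simpa [h2, hD] using hcol.symm

theorem apply_one_ne_zero (h : IsPencilVertex A B D c t) (h2 : (2 : F) ≠ 0) (hD : D ≠ 0)
    (ht : t ≠ 0) : t 1 ≠ 0 := by
  intro t₁
  have t₄ := h.apply_four_eq_zero h2 hD
  have t₀ : t 0 = 0 := by simpa [t₁, h2] using h.mul_apply_one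
  have t₂ : t 2 = 0 := by simpa [t₀, t₁, t₄] using h.sPoint.2.symm
  have t₃ : t 3 = 0 := by simpa [t₀, t₁, t₂, hD] using h.sPoint.1
  apply ht
  ext i
  fin_cases i <;> assumption

theorem mem_singularCandidates (h : IsPencilVertex A B D c t) (h2 : (2 : F) ≠ 0) (hD : D ≠ 0)
    (t₁ : t 1 = 1) : t ∈ singularCandidates A B D := by
  have t₄ := h.apply_four_eq_zero h2 hD
  have t₀ : t 0 = (c - (A + B)) / 2 := by
    rw [eq_div_iff h2]
    linear_combination (c - (A + B)) * t₁ - h.mul_apply_one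
  have t₀_eq : t 0 = t 2 ^ 2 - D * t 3 ^ 2 := by simpa [t₁] using h.sPoint.1
  rcases eq_or_ne c 0 with rfl | hc₀
  · have t₂ := h.apply_two_eq_zero h2 zero_ne_one
    have t₃_sq : t 3 ^ 2 = (A + B) / 2 / D := by
      rw [eq_div_iff hD]
      linear_combination t₀_eq - t₀ + t 2 * t₂
    refine .inl (.inr ⟨t 3, t₃_sq, ?_⟩)
    ext i
    fin_cases i <;> simp [t₀, t₁, t₂, t₄]
  have t₃ := h.apply_three_eq_zero h2 hD hc₀
  rcases eq_or_ne c 1 with rfl | hc₁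
  · have t₂_sq : t 2 ^ 2 = (1 - (A + B)) / 2 := by
      linear_combination t₀ - t₀_eq + D * t 3 * t₃
    refine .inr ⟨t 2, t₂_sq, ?_⟩
    ext i
    fin_cases i <;> simp [t₀, t₁, t₃, t₄]
  · have t₂ := h.apply_two_eq_zero h2 hc₁
    refine .inl (.inl ?_)
    ext i
    fin_cases i <;> simp [t₀_eq, t₁, t₂, t₃, t₄]

end IsPencilVertex

theorem finitely_many_singular_points_general (hF : ringChar F ≠ 2) (A B : F) (hD : D ≠ 0) :
    {p : Projectivization F (Fin 5 → F) |
      ∃ (t : Fin 5 → F) (ht : t ≠ 0), p = Projectivization.mk F t ht ∧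
        SPoint A B D t ∧ (jacobian A B D t).rank ≤ 1}.Finite := by
  have h2 : (2 : F) ≠ 0 := Ring.two_ne_zero hF
  refine (finite_setOf_projectivization_mk_mem (finite_singularCandidates A B D)).subset ?_
  rintro _ ⟨t, ht, rfl, hS, hrank⟩
  obtain ⟨c, hc⟩ := hS.exists_isPencilVertex h2 hD ht hrank
  have t₁ : t 1 ≠ 0 := hc.apply_one_ne_zero h2 hD ht
  have normalized : (t 1)⁻¹ • t ∈ singularCandidates A B D :=
    (hc.smul _).mem_singularCandidates h2 hD (inv_mul_cancel₀ t₁)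
  refine ⟨_, normalized, smul_ne_zero (inv_ne_zero t₁) ht, ?_⟩
  rw [Projectivization.mk_eq_mk_iff']
  exact ⟨t 1, smul_inv_smul₀ t₁ t⟩

end Surface

/-- Proposition 1 b): for `char K ≠ 2` and `D ≠ 0`, the surface `S^{(D;A,B)}` has at most
finitely many singular points over an algebraic closure of `K`. -/
theorem finitely_many_singular_points (K : Type*) [Field K] (hchar : ringChar K ≠ 2)
    (A B D : K) (hD : D ≠ 0) :
    {p : Projectivization (AlgebraicClosure K) (Fin 5 → AlgebraicClosure K) |
      ∃ (t : Fin 5 → AlgebraicClosure K) (ht : t ≠ 0),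
        p = Projectivization.mk (AlgebraicClosure K) t ht ∧
        SPoint (algebraMap K (AlgebraicClosure K) A) (algebraMap K (AlgebraicClosure K) B)
          (algebraMap K (AlgebraicClosure K) D) t ∧
        (jacobian (algebraMap K (AlgebraicClosure K) A) (algebraMap K (AlgebraicClosure K) B)
          (algebraMap K (AlgebraicClosure K) D) t).rank ≤ 1}.Finite :=
  finitely_many_singular_points_general (Algebra.ringChar_eq K (AlgebraicClosure K) ▸ hchar) _ _
    ((map_ne_zero _).mpr hD)
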